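/- For all integers r ≥ 1 and n > r, the number D_r(n) of Dyck paths of semi-length n that have exactly r peaks of height h for every height h with 1 ≤ h ≤ (maximum height of the path) is divisible by r+1. -/

import Mathlib

/-- The step associated to a letter: `true` is an up step `+1`, `false` a down step `-1`. -/
def stepVal (b : Bool) : ℤ := if b then 1 else -1

/-- Partial sum `S_i`: the sum of the first `i` steps of the word `w`. -/
def psum {L : ℕ} (w : Fin L → Bool) (i : ℕ) : ℤ :=
  ∑ j : Fin L, if (j : ℕ) < i then stepVal (w j) else 0

/-- A Dyck bridge: a `±1` word whose total sum is `0`. -/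
def IsBridge {L : ℕ} (w : Fin L → Bool) : Prop := psum w L = 0

/-- A Dyck path: a bridge all of whose partial sums are nonnegative. -/
def IsDyck {L : ℕ} (w : Fin L → Bool) : Prop :=
  IsBridge w ∧ ∀ i : ℕ, 0 ≤ psum w i

/-- A peak at (0-based) position `i`: step `i` is up and step `i+1` is down. -/
def IsPeak {L : ℕ} (w : Fin L → Bool) (i : ℕ) : Prop :=
  ∃ j k : Fin L, (j : ℕ) = i ∧ (k : ℕ) = i + 1 ∧ w j = true ∧ w k = false

/-- The height of the peak at (0-based) position `i`, i.e. the altitude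
reached by its up step. -/
def peakHeight {L : ℕ} (w : Fin L → Bool) (i : ℕ) : ℤ := psum w (i + 1)

/-- A crossing of the x-axis at (1-based) index `i`: `0 < i < L`, `S_i = 0`,
and the steps `w_i`, `w_{i+1}` (1-based) are equal. -/
def IsCrossing {L : ℕ} (w : Fin L → Bool) (i : ℕ) : Prop :=
  0 < i ∧ i < L ∧ psum w i = 0 ∧
    ∃ j k : Fin L, (j : ℕ) + 1 = i ∧ (k : ℕ) = i ∧ w j = w k


def pFin : ℤ → List Bool → ℤ
  | c, [] => c
  | c, b :: l => pFin (c + stepVal b) l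

def pNN : ℤ → List Bool → Prop
  | c, [] => 0 ≤ c
  | c, b :: l => 0 ≤ c ∧ pNN (c + stepVal b) l

def pMx : ℤ → List Bool → ℤ
  | c, [] => c
  | c, b :: l => max c (pMx (c + stepVal b) l)

def pPk (h : ℤ) : Bool → ℤ → List Bool → ℕ
  | _, _, [] => 0
  | p, c, b :: l => (if p = true ∧ b = false ∧ c = h then 1 else 0) + pPk h b (c + stepVal b) l

/-- erase the steps above level t -/
def pE (t : ℤ) : ℤ → List Bool → List Bool
  | _, [] => []
  | c, b :: l => if c < t ∨ (c = t ∧ b = false) then b :: pE t (c + stepVal b) l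
      else pE t (c + stepVal b) l

/-- the decisions at level t -/
def pV (t : ℤ) : ℤ → List Bool → List Bool
  | _, [] => []
  | c, b :: l => if c = t then b :: pV t (c + stepVal b) l else pV t (c + stepVal b) l

def pVis (t : ℤ) : ℤ → List Bool → ℕ
  | _, [] => 0
  | c, b :: l => (if c = t then 1 else 0) + pVis t (c + stepVal b) l

def vOk : Bool → List Bool → Prop
  | p, [] => p = false
  | _, b :: v => vOk b v

def vZ : Bool → List Bool → ℕ
  | _, [] => 0
  | p, b :: v => (if p = false ∧ b = false then 1 else 0) + vZ b v

theorem sv_t : stepVal true = 1 := rfl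
theorem sv_f : stepVal false = -1 := rfl

theorem pMx_ge (c : ℤ) (l : List Bool) : c ≤ pMx c l := by
  cases l <;> simp [pMx]

theorem pPk_indep (h c : ℤ) (hc : c ≠ h) (p q : Bool) (l : List Bool) :
    pPk h p c l = pPk h q c l := by
  cases l <;> simp [pPk, hc]

theorem pPk_pos_mx (h : ℤ) (p : Bool) (c : ℤ) (l : List Bool) (hp : 0 < pPk h p c l) :
    h ≤ pMx c l := by
  induction l generalizing p c with
  | nil => simp [pPk] at hp
  | cons b l ih =>
    simp only [pPk] at hp
    simp only [pMx]
    split_ifs at hp with h1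
    · have := h1.2.2; subst this; exact le_max_left _ _
    · exact le_trans (ih b _ (by omega)) (le_max_right _ _)

/-- combined facts about the erasure -/
theorem pE_facts (t : ℤ) (ht : 0 ≤ t) (l : List Bool) : ∀ c : ℤ, pMx c l ≤ t + 1 → pFin c l < t →
    pFin (min c t) (pE t c l) = pFin c l ∧ pMx (min c t) (pE t c l) ≤ t ∧
    (pNN c l → pNN (min c t) (pE t c l)) ∧
    (pV t c l).count false = pVis t (min c t) (pE t c l) ∧
    (∀ p, (p = false ∨ t ≤ c) → vOk p (pV t c l)) := by
  induction l with
  | nil =>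
    intro c h1 h2
    simp only [pMx, pFin] at h1 h2
    rw [min_eq_left h2.le]
    simp [pFin, pE, pMx, pNN, pV, pVis, vOk]
    grind
  | cons b l ih =>
    intro c h1 h2
    simp only [pMx, pFin, max_le_iff] at h1 h2
    obtain ⟨i1, i2, i3, i4, i5⟩ := ih (c + stepVal b) h1.2 h2
    have h3 := (pMx_ge _ _).trans h1.2
    rcases lt_trichotomy c t with hc | hc | hc
    · have e1 : min c t = c := min_eq_left hc.le
      have e2 : min (c + stepVal b) t = c + stepVal b := by
        apply min_eq_left; cases b <;> simp [stepVal] <;> omega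
      rw [e2] at i1 i2 i3 i4
      simp only [e1, pE, pV, hc, hc.ne, true_or, if_true, if_false, pFin, pMx, pNN, pVis]
      refine ⟨i1, max_le hc.le i2, fun h => ⟨h.1, i3 h.2⟩, by simpa using i4, ?_⟩
      intro p hp
      exact i5 p (by left; rcases hp with hp | hp; exact hp; omega)
    · subst hc
      cases b
      · have e2 : min (c + stepVal false) c = c + stepVal false := by
          apply min_eq_left; simp [stepVal]
        rw [e2] at i1 i2 i3 i4
        simp only [min_self, pE, pV, if_true, pFin, pMx, pNN, pVis, vOk, and_self, or_true]
        refine ⟨i1, max_le le_rfl i2, fun h => ⟨h.1, i3 h.2⟩, ?_, ?_⟩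
        · rw [List.count_cons_self, i4]; omega
        · intro p hp; exact i5 false (Or.inl rfl)
      · have e2 : min (c + stepVal true) c = c := by
          apply min_eq_right; simp [stepVal]
        rw [e2] at i1 i2 i3 i4
        have hE : pE c c (true :: l) = pE c (c + stepVal true) l := by simp [pE]
        simp only [min_self, hE, pV, if_true, pFin, pNN, vOk]
        refine ⟨i1, i2, fun h => i3 h.2, ?_, ?_⟩
        · rw [← i4]; simp
        · intro p hp; exact i5 true (Or.inr (by simp [stepVal]))
    · have hc1 : c = t + 1 := by omega
      cases b
      swap
      · simp [stepVal] at h3; omega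
      have e1 : min c t = t := min_eq_right hc.le
      have e3 : c + stepVal false = t := by simp [stepVal]; omega
      rw [e3, min_self] at i1 i2 i3 i4
      rw [e3] at i5
      have hE : pE t c (false :: l) = pE t (c + stepVal false) l := by
        simp [pE, hc.le, hc.ne']
      simp only [e1, hE, pV, hc.ne', if_false, pFin, pNN, e3]
      refine ⟨i1, i2, fun h => i3 h.2, i4, ?_⟩
      intro p hp; exact i5 p (Or.inr le_rfl)

/-- injectivity -/
theorem pEV_inj (t : ℤ) (l : List Bool) : ∀ (l' : List Bool) (c : ℤ),
    pMx c l ≤ t + 1 → pMx c l' ≤ t + 1 → pFin c l < t → pFin c l' < t →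
    pE t c l = pE t c l' → pV t c l = pV t c l' → l = l' := by
  induction l with
  | nil =>
    intro l' c h1 h2 h3 h4 h5 h6
    cases l' with
    | nil => rfl
    | cons b l' =>
      simp only [pFin] at h3
      simp [pE, h3] at h5
  | cons b l ih =>
    intro l' c h1 h2 h3 h4 h5 h6
    cases l' with
    | nil =>
      simp only [pFin] at h4
      simp [pE, h4] at h5
    | cons b' l' =>
      simp only [pMx, pFin, max_le_iff] at h1 h2 h3 h4
      have g1 := (pMx_ge _ _).trans h1.2
      have g2 := (pMx_ge _ _).trans h2.2
      have hb : b = b' := by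
        rcases lt_trichotomy c t with hc | hc | hc
        · simp [pE, hc] at h5; exact h5.1
        · simp [pV, hc] at h6; exact h6.1
        · cases b <;> cases b' <;> simp [stepVal] at g1 g2 ⊢ <;> omega
      subst hb
      congr 1
      apply ih l' (c + stepVal b) h1.2 h2.2 h3 h4
      · simp only [pE] at h5; split_ifs at h5
        · simpa using h5
        · exact h5
      · simp only [pV] at h6; split_ifs at h6
        · simpa using h6
        · exact h6

theorem vOk_nil_of (v : List Bool) (p : Bool) (h : vOk p v) (h0 : v.count false = 0) (hp : v ≠ [] ) :
    False := by
  induction v generalizing p with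
  | nil => exact hp rfl
  | cons b v ih =>
    cases b
    · simp at h0
    · cases v with
      | nil => simp [vOk] at h
      | cons a v => exact ih true h (by simpa using h0) (by simp)

theorem pEV_surj (t : ℤ) (k : ℕ) : ∀ (s v : List Bool) (c : ℤ) (p : Bool),
    s.length + v.length ≤ k → c ≤ t →
    pMx c s ≤ t → pFin c s < t → (p = false ∨ c = t) → vOk p v → v.count false = pVis t c s →
    ∃ l, pE t c l = s ∧ pV t c l = v ∧ pMx c l ≤ t + 1 ∧ pFin c l = pFin c s ∧
      (pNN c s → pNN c l) := by
  induction k with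
  | zero =>
    intro s v c p hk h1 h2 h3 h4 h5 h6
    have hs : s = [] := by apply List.eq_nil_of_length_eq_zero; omega
    have hv : v = [] := by apply List.eq_nil_of_length_eq_zero; omega
    subst hs hv
    exact ⟨[], by simp [pE, pV, pMx]; omega⟩
  | succ k ih =>
    intro s v c p hk h1 h2 h3 h4 h5 h6
    rcases h1.lt_or_eq with hc | hc
    · cases s with
      | nil =>
        have hv : v = [] := by
          by_contra hv
          exact vOk_nil_of v p h5 (by simpa [pVis] using h6) hv
        subst hv
        exact ⟨[], by simp [pE, pV, pMx]; omega⟩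
      | cons b s =>
        simp only [pMx, pFin, max_le_iff, pVis, hc.ne, if_false, zero_add, List.length_cons] at h2 h3 h6 hk
        obtain ⟨l, a1, a2, a3, a4, a5⟩ := ih s v (c + stepVal b) p (by omega)
          ((pMx_ge _ _).trans h2.2) h2.2 h3 (by left; rcases h4 with h4 | h4; exact h4; omega) h5 h6
        refine ⟨b :: l, ?_, ?_, ?_, ?_, ?_⟩
        · simp [pE, hc, a1]
        · simp [pV, hc.ne, a2]
        · simp only [pMx]; exact max_le (by omega) a3
        · simp [pFin, a4]
        · simp only [pNN]; exact fun h => ⟨h.1, a5 h.2⟩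
    · subst hc
      cases s with
      | nil => simp [pFin] at h3
      | cons b s =>
        have h2' := h2
        simp only [pMx, max_le_iff] at h2'
        have g := (pMx_ge _ _).trans h2'.2
        cases b
        swap
        · simp [stepVal] at g
        cases v with
        | nil => simp [pVis] at h6; omega
        | cons x v =>
          cases x
          · simp only [pFin, pVis, if_true, List.length_cons, List.count_cons_self] at h3 h6 hk
            obtain ⟨l, a1, a2, a3, a4, a5⟩ := ih s v (c + stepVal false) false (by omega)
              g h2'.2 h3 (Or.inl rfl) h5 (by omega)
            refine ⟨false :: l, ?_, ?_, ?_, ?_, ?_⟩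
            · simp [pE, a1]
            · simp [pV, a2]
            · simp only [pMx]; exact max_le (by omega) a3
            · simp [pFin, a4]
            · simp only [pNN]; exact fun h => ⟨h.1, a5 h.2⟩
          · obtain ⟨l, a1, a2, a3, a4, a5⟩ := ih (false :: s) v c true
              (by simp at hk ⊢; omega) h1 h2 h3 (Or.inr rfl) h5 (by simpa using h6)
            have e : c + stepVal true + stepVal false = c := by simp [stepVal]
            have e1 : ¬ (c + 1 < c) := by omega
            refine ⟨true :: false :: l, ?_, ?_, ?_, ?_, ?_⟩
            · simp only [pE, e, a1]; simp [stepVal]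
            · simp only [pV, e, a2]; simp [stepVal]
            · simp only [pMx, e]; simp [stepVal, a3]
            · simp only [pFin, e] at a4 ⊢; exact a4
            · intro h
              have h' := h
              simp only [pNN] at h
              simp only [pNN, e]
              refine ⟨h.1, ?_, a5 h'⟩
              simp [stepVal]; omega

theorem pPk_low (t h : ℤ) (hh : h < t) (l : List Bool) : ∀ (c : ℤ) (p : Bool), pMx c l ≤ t + 1 →
    pPk h p c l = pPk h p (min c t) (pE t c l) := by
  induction l with
  | nil => intro c p _; simp [pPk, pE]
  | cons b l ih =>
    intro c p h1
    simp only [pMx, max_le_iff] at h1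
    have i := ih (c + stepVal b) b h1.2
    have h3 := (pMx_ge _ _).trans h1.2
    rcases lt_trichotomy c t with hc | hc | hc
    · have e1 : min c t = c := min_eq_left hc.le
      have e2 : min (c + stepVal b) t = c + stepVal b := by
        apply min_eq_left; cases b <;> simp [stepVal] <;> omega
      rw [e2] at i
      simp only [e1, pE, pPk, hc, true_or, if_true, i]
    · subst hc
      cases b
      · have e2 : min (c + stepVal false) c = c + stepVal false := by
          apply min_eq_left; simp [stepVal]
        rw [e2] at i
        simp only [min_self, pE, pPk, if_true, and_self, or_true, i]
      · have e2 : min (c + stepVal true) c = c := by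
          apply min_eq_right; simp [stepVal]
        rw [e2] at i
        have hE : pE c c (true :: l) = pE c (c + stepVal true) l := by simp [pE]
        simp only [min_self, hE, pPk, i]
        simp [pPk_indep h c hh.ne' true p]
    · have hc1 : c = t + 1 := by omega
      cases b
      swap
      · simp [stepVal] at h3; omega
      have e1 : min c t = t := min_eq_right hc.le
      have e3 : c + stepVal false = t := by simp [stepVal]; omega
      rw [e3, min_self] at i
      have hE : pE t c (false :: l) = pE t (c + stepVal false) l := by
        simp [pE, hc.le, hc.ne']
      have hc2 : c ≠ h := by omega
      simp only [e1, hE, if_false, pPk, e3, i, hc2, and_false, zero_add]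
      exact pPk_indep h t hh.ne' _ _ _

theorem pPk_high (t : ℤ) (l : List Bool) : ∀ (c : ℤ) (p : Bool), pMx c l ≤ t + 1 → pFin c l < t →
    (c = t + 1 → p = true) →
    pPk (t+1) p c l = (if c = t + 1 then 1 else 0) + (pV t c l).count true ∧
    l.length + (if c = t + 1 then 1 else 0) = (pE t c l).length + 2 * (pPk (t+1) p c l) ∧
    pPk t p c l = vZ (if c = t then !p else if c = t + 1 then true else false) (pV t c l) := by
  induction l with
  | nil =>
    intro c p h1 h2 hp
    simp only [pFin] at h2
    have e : c ≠ t + 1 := by omega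
    simp [pPk, pE, pV, vZ, e]
  | cons b l ih =>
    intro c p h1 h2 hp
    simp only [pMx, pFin, max_le_iff] at h1 h2
    have h3 := (pMx_ge _ _).trans h1.2
    have i := ih (c + stepVal b) b h1.2 h2 (by cases b <;> simp [stepVal]; omega)
    simp only [pPk, pE, pV, List.length_cons]
    rcases lt_trichotomy c t with hc | hc | hc
    · have f1 : c ≠ t := by omega
      have f2 : c ≠ t + 1 := by omega
      have f3 : c + stepVal b ≠ t + 1 := by cases b <;> simp [stepVal] <;> omega
      have f4 : (if c + stepVal b = t then !b else false) = false := by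
        cases b <;> simp [stepVal]; omega
      simp only [f1, f2, f3, f4, hc, if_false, if_true, true_or, and_false, zero_add, add_zero, List.length_cons] at i ⊢
      exact ⟨i.1, by omega, i.2.2⟩
    · subst hc
      cases b <;> simp [stepVal] at i ⊢
      · cases p <;> simp [vZ] <;> omega
      · simp [vZ]; omega
    · have hc1 : c = t + 1 := by omega
      subst hc1
      cases b
      · simp [stepVal] at i ⊢
        simp [hp rfl]; omega
      · simp [stepVal] at h3

def vQ (p : Bool) (N i j : ℕ) (v : List Bool) : Prop :=
  vOk p v ∧ v.count false = N ∧ v.count true = i ∧ vZ p v = j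

def nF (N i j : ℕ) : ℕ :=
  match i with
  | 0 => if j = N then 1 else 0
  | i + 1 => if j < N then N.choose j * i.choose (N - j - 1) else 0

def nT (N i j : ℕ) : ℕ :=
  match N with
  | 0 => 0
  | N + 1 => if j ≤ N then N.choose j * i.choose (N - j) else 0

theorem nF_rec0 (N i : ℕ) : nF (N + 1) (i + 1) 0 = nT (N + 1) i 0 := by
  simp [nF, nT]

theorem nF_rec (N i j : ℕ) : nF (N + 1) (i + 1) (j + 1) = nT (N + 1) i (j + 1) + nF N (i + 1) j := by
  simp only [nF, nT]
  rcases lt_trichotomy j N with h | h | h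
  · obtain ⟨k, rfl⟩ : ∃ k, N = j + 1 + k := ⟨N - (j + 1), by omega⟩
    have a1 : j + 1 + k + 1 - (j + 1) - 1 = k := by omega
    have a2 : j + 1 + k - (j + 1) = k := by omega
    have a3 : j + 1 + k - j - 1 = k := by omega
    have a4 : j + 1 < j + 1 + k + 1 := by omega
    have a5 : j + 1 ≤ j + 1 + k := by omega
    simp only [a1, a2, a3, a4, a5, h, if_true, Nat.choose_succ_succ (j + 1 + k) j]
    ring
  · subst h; simp
  · simp [show ¬ (j < N) by omega, show ¬ (j + 1 ≤ N) by omega]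

theorem nT_rec (N i j : ℕ) : nT (N + 1) (i + 1) j = nT (N + 1) i j + nF N (i + 1) j := by
  simp only [nF, nT]
  rcases lt_trichotomy j N with h | h | h
  · obtain ⟨k, rfl⟩ : ∃ k, N = j + 1 + k := ⟨N - (j + 1), by omega⟩
    have a2 : j + 1 + k - j = k + 1 := by omega
    have a5 : j ≤ j + 1 + k := by omega
    simp only [a2, a5, h, if_true, Nat.choose_succ_succ i k, Nat.add_sub_cancel]
    ring
  · subst h; simp
  · simp [show ¬ (j < N) by omega, show ¬ (j ≤ N) by omega]

theorem nT_zero (N j : ℕ) : nT (N + 1) 0 j = nF N 0 j := by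
  simp only [nF, nT]
  rcases lt_trichotomy j N with h | h | h
  · obtain ⟨k, rfl⟩ : ∃ k, N = j + 1 + k := ⟨N - (j + 1), by omega⟩
    have a2 : j + 1 + k - j = k + 1 := by omega
    simp [a2]; omega
  · subst h; simp
  · simp [show ¬ (j ≤ N) by omega, show j ≠ N by omega]

def HasC (P : List Bool → Prop) (n : ℕ) : Prop :=
  ∃ S : Finset (List Bool), (∀ v, v ∈ S ↔ P v) ∧ S.card = n

theorem HasC_empty (P : List Bool → Prop) (h : ∀ v, ¬ P v) : HasC P 0 :=
  ⟨∅, by simpa using h, rfl⟩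

theorem HasC_cons (P P1 P2 : List Bool → Prop) (a b : ℕ) (h1 : HasC P1 a) (h2 : HasC P2 b)
    (h0 : ¬ P []) (ht : ∀ v, P (true :: v) ↔ P1 v) (hf : ∀ v, P (false :: v) ↔ P2 v) :
    HasC P (a + b) := by
  obtain ⟨S, hS, rfl⟩ := h1
  obtain ⟨T, hT, rfl⟩ := h2
  refine ⟨(S.map ⟨List.cons true, List.cons_injective⟩) ∪
    (T.map ⟨List.cons false, List.cons_injective⟩), ?_, ?_⟩
  · intro v
    rcases v with _ | ⟨b, v⟩
    · simp [h0]
    · cases b <;> simp [hS, hT, ht, hf]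
  · rw [Finset.card_union_of_disjoint, Finset.card_map, Finset.card_map]
    rw [Finset.disjoint_left]
    intro v
    simp only [Finset.mem_map, Function.Embedding.coeFn_mk]
    rintro ⟨x, -, rfl⟩ ⟨y, -, h⟩
    simp at h

theorem vQ_t (p : Bool) (N i j : ℕ) (v : List Bool) :
    vQ p N (i+1) j (true :: v) ↔ vQ true N i j v := by
  simp [vQ, vOk, vZ]

theorem vQ_t0 (p : Bool) (N j : ℕ) (v : List Bool) :
    vQ p N 0 j (true :: v) ↔ False := by
  simp [vQ]

theorem vQ_f0 (p : Bool) (i j : ℕ) (v : List Bool) :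
    vQ p 0 i j (false :: v) ↔ False := by
  simp [vQ]

theorem vQ_tf (N i j : ℕ) (v : List Bool) :
    vQ true (N+1) i j (false :: v) ↔ vQ false N i j v := by
  simp [vQ, vOk, vZ]

theorem vQ_ff (N i j : ℕ) (v : List Bool) :
    vQ false (N+1) i (j+1) (false :: v) ↔ vQ false N i j v := by
  simp [vQ, vOk, vZ, add_comm 1]

theorem vQ_ff0 (N i : ℕ) (v : List Bool) :
    vQ false (N+1) i 0 (false :: v) ↔ False := by
  simp [vQ, vZ]

theorem vQ_nil (p : Bool) (N i j : ℕ) : vQ p N i j [] ↔ p = false ∧ 0 = N ∧ 0 = i ∧ 0 = j := by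
  simp [vQ, vOk, vZ]

theorem HasC_false : HasC (fun _ => False) 0 := HasC_empty _ (by simp)

theorem vQ_card (k : ℕ) : ∀ N i j, N + i ≤ k →
    HasC (vQ false N i j) (nF N i j) ∧ HasC (vQ true N i j) (nT N i j) := by
  induction k with
  | zero =>
    intro N i j h
    obtain rfl : N = 0 := by omega
    obtain rfl : i = 0 := by omega
    constructor
    · by_cases hj : j = 0
      · subst hj
        refine ⟨{[]}, ?_, by simp [nF]⟩
        intro v
        rcases v with _ | ⟨_ | _, v⟩
        · simp [vQ_nil]
        · simp [vQ_f0]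
        · simp [vQ_t0]
      · simp only [nF, hj, if_false]
        apply HasC_empty
        intro v
        rcases v with _ | ⟨_ | _, v⟩
        · simp [vQ_nil]; omega
        · simp [vQ_f0]
        · simp [vQ_t0]
    · apply HasC_empty
      intro v
      rcases v with _ | ⟨_ | _, v⟩
      · simp [vQ_nil]
      · simp [vQ_f0]
      · simp [vQ_t0]
  | succ k ih =>
    intro N i j h
    rcases N with _ | N <;> rcases i with _ | i
    · exact ih 0 0 j (by omega)
    · constructor
      · have e : nF 0 (i+1) j = nT 0 i j + 0 := by simp [nF, nT]
        rw [e]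
        exact HasC_cons _ _ _ _ _ (ih 0 i j (by omega)).2 HasC_false (by simp [vQ_nil])
          (vQ_t _ _ _ _) (vQ_f0 _ _ _)
      · have e : nT 0 (i+1) j = nT 0 i j + 0 := by simp [nT]
        rw [e]
        exact HasC_cons _ _ _ _ _ (ih 0 i j (by omega)).2 HasC_false (by simp [vQ_nil])
          (vQ_t _ _ _ _) (vQ_f0 _ _ _)
    · constructor
      · rcases j with _ | j
        · have e : nF (N+1) 0 0 = 0 + 0 := by simp [nF]
          rw [e]
          exact HasC_cons _ _ _ _ _ HasC_false HasC_false (by simp [vQ_nil])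
            (vQ_t0 _ _ _) (vQ_ff0 _ _)
        · have e : nF (N+1) 0 (j+1) = 0 + nF N 0 j := by simp [nF]
          rw [e]
          exact HasC_cons _ _ _ _ _ HasC_false (ih N 0 j (by omega)).1 (by simp [vQ_nil])
            (vQ_t0 _ _ _) (vQ_ff _ _ _)
      · rw [nT_zero, ← zero_add (nF N 0 j)]
        exact HasC_cons _ _ _ _ _ HasC_false (ih N 0 j (by omega)).1 (by simp [vQ_nil])
            (vQ_t0 _ _ _) (vQ_tf _ _ _)
    · constructor
      · rcases j with _ | j
        · rw [nF_rec0, ← add_zero (nT _ _ _)]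
          exact HasC_cons _ _ _ _ _ (ih (N+1) i 0 (by omega)).2 HasC_false (by simp [vQ_nil])
            (vQ_t _ _ _ _) (vQ_ff0 _ _)
        · rw [nF_rec]
          exact HasC_cons _ _ _ _ _ (ih (N+1) i (j+1) (by omega)).2 (ih N (i+1) j (by omega)).1
            (by simp [vQ_nil]) (vQ_t _ _ _ _) (vQ_ff _ _ _)
      · rw [nT_rec]
        exact HasC_cons _ _ _ _ _ (ih (N+1) i j (by omega)).2 (ih N (i+1) j (by omega)).1
            (by simp [vQ_nil]) (vQ_t _ _ _ _) (vQ_tf _ _ _)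

theorem nF_dvd (r N : ℕ) (hr : 1 ≤ r) : (r + 1) ∣ nF N r r := by
  obtain ⟨q, rfl⟩ : ∃ q, r = q + 1 := ⟨r - 1, by omega⟩
  simp only [nF]
  split_ifs with h
  · obtain ⟨k, rfl⟩ : ∃ k, N = q + 1 + (k + 1) := ⟨N - (q + 2), by omega⟩
    have e : q + 1 + (k + 1) - (q + 1) - 1 = k := by omega
    rw [e]
    have h1 : (q + 1) * q.choose k = (q + 1).choose (k + 1) * (k + 1) := Nat.add_one_mul_choose_eq q k
    have h2 := Nat.choose_succ_right_eq (q + 1 + (k + 1)) (q + 1)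
    have e2 : q + 1 + (k + 1) - (q + 1) = k + 1 := by omega
    rw [e2] at h2
    have hc : Nat.Coprime (q + 1 + 1) (q + 1) := by simp
    apply hc.dvd_of_dvd_mul_left
    refine ⟨(q + 1 + (k + 1)).choose (q + 1 + 1) * (q+1).choose (k+1), ?_⟩
    calc (q + 1) * ((q + 1 + (k + 1)).choose (q + 1) * q.choose k)
        = (q + 1 + (k + 1)).choose (q + 1) * ((q + 1) * q.choose k) := by ring
      _ = ((q + 1 + (k + 1)).choose (q + 1) * (k + 1)) * (q+1).choose (k+1) := by rw [h1]; ring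
      _ = _ := by rw [← h2]; ring
  · simp

theorem low_len (l : List Bool) : ∀ (c : ℤ) (p : Bool), pNN c l → pMx c l ≤ 1 → pFin c l = 0 →
    (c = 1 → p = true) →
    l.length + (if c = 1 then 1 else 0) = 2 * pPk 1 p c l := by
  induction l with
  | nil =>
    intro c p h1 h2 h3 h4
    simp only [pFin] at h3
    simp [h3, pPk]
  | cons b l ih =>
    intro c p h1 h2 h3 h4
    simp only [pFin, pMx, pNN, max_le_iff] at h1 h2 h3
    have g1 := (pMx_ge _ _).trans h2.2
    have g2 : 0 ≤ c + stepVal b := by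
      have := h1.2
      cases l <;> simp only [pNN] at this
      · exact this
      · exact this.1
    have i := ih (c + stepVal b) b h1.2 h2.2 h3 (by cases b <;> simp [stepVal]; omega)
    simp only [pPk, List.length_cons]
    have : c = 0 ∨ c = 1 := by omega
    rcases this with rfl | rfl
    · cases b
      · simp [stepVal] at g2
      · simp [stepVal] at i ⊢; omega
    · cases b
      · simp [stepVal, h4] at i ⊢; omega
      · simp [stepVal] at g1

def Xp (r n : ℕ) (l : List Bool) : Prop :=
  l.length = 2 * n ∧ pFin 0 l = 0 ∧ pNN 0 l ∧
    ∀ h : ℤ, 1 ≤ h → h ≤ pMx 0 l → pPk h false 0 l = r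

theorem list_main (r n : ℕ) (hr : 1 ≤ r) (hn : r < n) (X : Finset (List Bool))
    (hX : ∀ l, l ∈ X ↔ Xp r n l) : (r + 1) ∣ X.card := by
  classical
  let κ : List Bool → ℤ × List Bool := fun l => (pMx 0 l, pE (pMx 0 l - 1) 0 l)
  rw [Finset.card_eq_sum_card_image κ X]
  apply Finset.dvd_sum
  intro b hb
  obtain ⟨l0, hl0, rfl⟩ := Finset.mem_image.1 hb
  obtain ⟨x1, x2, x3, x4⟩ := (hX l0).1 hl0
  obtain ⟨t, ht⟩ : ∃ t, pMx 0 l0 = t + 1 := ⟨pMx 0 l0 - 1, by ring⟩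
  have ht1 : 1 ≤ t := by
    by_contra hlt
    have hm : pMx 0 l0 ≤ 1 := by omega
    have := low_len l0 0 false x3 hm x2 (by simp)
    simp at this
    have hp : 0 < pPk 1 false 0 l0 := by omega
    have := x4 1 le_rfl (pPk_pos_mx _ _ _ _ hp)
    omega
  have m0 : min 0 t = 0 := min_eq_left (by omega)
  have n0 : (0 : ℤ) ≠ t := by omega
  have n1 : (0 : ℤ) ≠ t + 1 := by omega
  obtain ⟨a1, a2, a3, a4, a5⟩ := pE_facts t (by omega) l0 0 ht.le (by omega)
  rw [m0] at a1 a2 a3 a4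
  obtain ⟨S, hS, hc⟩ := (vQ_card _ (pVis t 0 (pE t 0 l0)) r r le_rfl).1
  have key : (X.filter (fun a => κ a = κ l0)).card = S.card := by
    apply Finset.card_nbij (pV t 0)
    · intro l hl
      simp only [Finset.coe_filter, Set.mem_ofPred_eq, κ, ht, Prod.mk.injEq, hX] at hl
      obtain ⟨⟨y1, y2, y3, y4⟩, y5, y6⟩ := hl
      rw [y5] at y6
      simp only [add_sub_cancel_right] at y6
      obtain ⟨b1, b2, b3, b4, b5⟩ := pE_facts t (by omega) l 0 y5.le (by omega)
      obtain ⟨c1, c2, c3⟩ := pPk_high t l 0 false y5.le (by omega) (fun h => absurd h n1)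
      rw [m0, y6] at b4
      simp only [n0, n1, if_false, zero_add] at c1 c3
      simp only [Finset.mem_coe, hS]
      refine ⟨b5 false (Or.inl rfl), b4, ?_, ?_⟩
      · rw [← c1]; exact y4 _ (by omega) (by omega)
      · rw [← c3]; exact y4 _ (by omega) (by omega)
    · intro l hl l' hl' hV
      simp only [Finset.coe_filter, Set.mem_ofPred_eq, κ, ht, Prod.mk.injEq, hX] at hl hl'
      obtain ⟨⟨y1, y2, y3, y4⟩, y5, y6⟩ := hl
      obtain ⟨⟨z1, z2, z3, z4⟩, z5, z6⟩ := hl'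
      rw [y5] at y6
      rw [z5] at z6
      simp only [add_sub_cancel_right] at y6 z6
      exact pEV_inj t l l' 0 y5.le z5.le (by omega) (by omega) (y6.trans z6.symm) hV
    · intro v hv
      simp only [Finset.mem_coe, hS] at hv
      obtain ⟨v1, v2, v3, v4⟩ := hv
      obtain ⟨l, b1, b2, b3, b4, b5⟩ := pEV_surj t _ (pE t 0 l0) v 0 false le_rfl (by omega) a2
        (by omega) (Or.inl rfl) v1 v2
      have hf : pFin 0 l = 0 := by rw [b4, a1, x2]
      obtain ⟨c1, c2, c3⟩ := pPk_high t l 0 false b3 (by omega) (fun h => absurd h n1)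
      obtain ⟨d1, d2, d3⟩ := pPk_high t l0 0 false ht.le (by omega) (fun h => absurd h n1)
      simp only [n0, n1, if_false, zero_add, add_zero] at c1 c2 c3 d1 d2 d3
      have e1 := x4 (t+1) (by omega) ht.ge
      have hk1 : pPk (t+1) false 0 l = r := by rw [c1, b2, v3]
      have hm : pMx 0 l = t + 1 := by
        apply le_antisymm b3
        apply pPk_pos_mx _ false; omega
      refine ⟨l, ?_, b2⟩
      simp only [Finset.coe_filter, Set.mem_ofPred_eq, κ, ht, Prod.mk.injEq, hX, hm,
        add_sub_cancel_right, b1, and_true]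
      refine ⟨?_, hf, b5 (a3 x3), ?_⟩
      · rw [b1] at c2; omega
      · intro h h1 h2
        rw [hm] at h2
        rcases h2.lt_or_eq with h3 | h3
        · rcases (Int.lt_add_one_iff.1 h3).lt_or_eq with h4 | h4
          · rw [pPk_low t h h4 l 0 false b3, b1, ← x4 h h1 (by omega),
              pPk_low t h h4 l0 0 false ht.le]
          · rw [h4, c3, b2, v4]
        · rw [h3, hk1]
  rw [key, hc]
  exact nF_dvd r _ hr

theorem psum_succ {L : ℕ} (w : Fin (L+1) → Bool) (i : ℕ) :
    psum w (i+1) = stepVal (w 0) + psum (fun j => w j.succ) i := by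
  simp [psum, Fin.sum_univ_succ]

theorem psum_zero {L : ℕ} (w : Fin L → Bool) : psum w 0 = 0 := by simp [psum]

theorem fin_ofFn : ∀ {L : ℕ} (w : Fin L → Bool) (c : ℤ), pFin c (List.ofFn w) = c + psum w L
  | 0, w, c => by simp [psum, pFin]
  | L + 1, w, c => by
    rw [List.ofFn_succ, pFin, fin_ofFn, psum_succ]; ring

theorem nn_ofFn : ∀ {L : ℕ} (w : Fin L → Bool) (c : ℤ),
    pNN c (List.ofFn w) ↔ ∀ i, 0 ≤ c + psum w i
  | 0, w, c => by simp [psum, pNN]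
  | L + 1, w, c => by
    rw [List.ofFn_succ, pNN, nn_ofFn]
    constructor
    · rintro ⟨h1, h2⟩ i
      cases i with
      | zero => rw [psum_zero]; omega
      | succ i => have := h2 i; rw [psum_succ]; omega
    · intro h
      refine ⟨by have := h 0; rw [psum_zero] at this; omega, fun i => ?_⟩
      have := h (i+1); rw [psum_succ] at this; omega

theorem mx_ofFn : ∀ {L : ℕ} (w : Fin L → Bool) (c h : ℤ),
    h ≤ pMx c (List.ofFn w) ↔ ∃ i, i ≤ L ∧ h ≤ c + psum w i
  | 0, w, c, h => by simp [psum, pMx]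
  | L + 1, w, c, h => by
    rw [List.ofFn_succ, pMx, le_max_iff, mx_ofFn]
    constructor
    · rintro (h1 | ⟨i, hi, h2⟩)
      · exact ⟨0, by omega, by rw [psum_zero]; omega⟩
      · exact ⟨i + 1, by omega, by rw [psum_succ]; omega⟩
    · rintro ⟨i, hi, h2⟩
      cases i with
      | zero => left; rw [psum_zero] at h2; omega
      | succ i => right; exact ⟨i, by omega, by rw [psum_succ] at h2; omega⟩

theorem isPeak_succ {L : ℕ} (w : Fin (L+1) → Bool) (i : ℕ) :
    IsPeak w (i+1) ↔ IsPeak (fun j => w j.succ) i := by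
  constructor
  · rintro ⟨j, k, hj, hk, h1, h2⟩
    obtain ⟨j', rfl⟩ := Fin.exists_succ_eq.2 (show j ≠ 0 by rintro rfl; simp at hj)
    obtain ⟨k', rfl⟩ := Fin.exists_succ_eq.2 (show k ≠ 0 by rintro rfl; simp at hk)
    exact ⟨j', k', by simpa using hj, by simpa using hk, h1, h2⟩
  · rintro ⟨j, k, hj, hk, h1, h2⟩
    exact ⟨j.succ, k.succ, by simpa using hj, by simpa using hk, h1, h2⟩

theorem isPeak_zero {L : ℕ} (w : Fin (L+1) → Bool) :
    IsPeak w 0 ↔ w 0 = true ∧ (List.ofFn (fun j => w (Fin.succ j))).head? = some false := by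
  constructor
  · rintro ⟨j, k, hj, hk, h1, h2⟩
    obtain ⟨k', rfl⟩ := Fin.exists_succ_eq.2 (show k ≠ 0 by rintro rfl; simp at hk)
    have hj' : j = 0 := Fin.ext (by simpa using hj)
    subst hj'
    refine ⟨h1, ?_⟩
    cases L with
    | zero => exact k'.elim0
    | succ L =>
      have : k' = 0 := Fin.ext (by simpa using hk)
      subst this
      simpa [List.ofFn_succ] using h2
  · rintro ⟨h1, h2⟩
    cases L with
    | zero => simp at h2
    | succ L =>
      refine ⟨0, 1, rfl, rfl, h1, ?_⟩
      simpa [List.ofFn_succ] using h2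

theorem pPk_head (h : ℤ) (p : Bool) (c : ℤ) (l : List Bool) :
    pPk h p c l = (if p = true ∧ l.head? = some false ∧ c = h then 1 else 0) +
      pPk h false c l := by
  cases l <;> simp [pPk]

open Classical in
theorem pk_ofFn : ∀ {L : ℕ} (w : Fin L → Bool) (c h : ℤ),
    pPk h false c (List.ofFn w) =
      ∑ i ∈ Finset.range L, if IsPeak w i ∧ c + psum w (i+1) = h then 1 else 0
  | 0, w, c, h => by simp [pPk]
  | L + 1, w, c, h => by
    rw [List.ofFn_succ, pPk, pPk_head, pk_ofFn, Finset.sum_range_succ', isPeak_zero]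
    simp only [isPeak_succ, psum_succ, psum_zero]
    simp only [← add_assoc]
    have e : ((w 0 = true ∧ (List.ofFn fun i => w (Fin.succ i)).head? = some false) ∧
      c + stepVal (w 0) + 0 = h) ↔ (w 0 = true ∧ (List.ofFn fun i => w (Fin.succ i)).head? = some false ∧
      c + stepVal (w 0) = h) := by rw [and_assoc, add_zero]
    simp only [e]
    have e2 : ∀ a b : ℕ, 0 + (a + b) = b + a := by intros; ring
    simp [add_comm]

theorem pk_card {L : ℕ} (w : Fin L → Bool) (h : ℤ) :
    Nat.card {i : ℕ // IsPeak w i ∧ peakHeight w i = h} = pPk h false 0 (List.ofFn w) := by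
  classical
  rw [pk_ofFn, ← Finset.card_filter]
  apply Nat.subtype_card
  intro i
  simp only [Finset.mem_filter, Finset.mem_range, peakHeight, zero_add]
  constructor
  · exact fun h => h.2
  · intro h
    refine ⟨?_, h⟩
    obtain ⟨j, -, hj, -⟩ := h.1
    omega

theorem Xp_ofFn (r n : ℕ) (w : Fin (2 * n) → Bool) : Xp r n (List.ofFn w) ↔ (IsDyck w ∧
        ∀ h : ℕ, 1 ≤ h → (∃ i : ℕ, i ≤ 2 * n ∧ (h : ℤ) ≤ psum w i) →
          Nat.card {i : ℕ // IsPeak w i ∧ peakHeight w i = (h : ℤ)} = r) := by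
  simp only [Xp, List.length_ofFn, fin_ofFn, nn_ofFn, mx_ofFn, zero_add, pk_card, IsDyck, IsBridge,
    true_and, and_assoc]
  refine and_congr_right fun _ => and_congr_right fun _ => ?_
  constructor
  · intro H h h1 h2
    exact H h (by omega) h2
  · intro H h h1 h2
    obtain ⟨k, rfl⟩ := Int.eq_ofNat_of_zero_le (show 0 ≤ h by omega)
    exact H k (by omega) h2

/-- For all integers `r ≥ 1` and `n > r`, the number `D_r(n)` of
Dyck paths of semi-length `n` that have exactly `r` peaks of height `h` for
every height `h` with `1 ≤ h ≤` (maximum height of the path) is divisible by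
`r + 1`.  The condition "`h` is at most the maximum height" is expressed as
"some partial sum reaches `h`". -/
theorem stmt_14 (r n : ℕ) (hr : 1 ≤ r) (hn : r < n) :
    (r + 1) ∣ Nat.card {w : Fin (2 * n) → Bool // IsDyck w ∧
        ∀ h : ℕ, 1 ≤ h → (∃ i : ℕ, i ≤ 2 * n ∧ (h : ℤ) ≤ psum w i) →
          Nat.card {i : ℕ // IsPeak w i ∧ peakHeight w i = (h : ℤ)} = r} := by
  classical
  let X : Finset (List Bool) := (Finset.univ.filter fun w : Fin (2 * n) → Bool => Xp r n (List.ofFn w)).map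
    ⟨List.ofFn, List.ofFn_injective⟩
  have hX : ∀ l, l ∈ X ↔ Xp r n l := by
    intro l
    simp only [X, Finset.mem_map, Finset.mem_filter, Finset.mem_univ, true_and,
      Function.Embedding.coeFn_mk]
    constructor
    · rintro ⟨w, hw, rfl⟩; exact hw
    · intro h
      obtain ⟨w, rfl⟩ : ∃ w : Fin (2 * n) → Bool, List.ofFn w = l := by
        rw [← h.1]; exact ⟨l.get, List.ofFn_get l⟩
      exact ⟨w, h, rfl⟩
  have := list_main r n hr hn X hX
  rw [Finset.card_map] at this
  convert this using 1
  apply Nat.subtype_card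
  intro w
  simp only [Finset.mem_filter, Finset.mem_univ, true_and]
  exact Xp_ofFn r n w
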